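/- Let R be a polynomial ring over an algebraically closed field K. Let I be an ideal generated by n ≥ 3 quadrics represented by minors by the 2×(n+1) matrix M = [[x, 0, a_{12}, a_{13}, a_{14}, …, a_{1n}], [y, a_{21}, 0, λa_{13}, a_{24}, …, a_{2n}]], where λ ∈ K is a scalar, all entries are linear forms or zero, and x, y are linearly independent linear forms. Assume additionally that every ideal J of height two generated by n − 1 quadrics in any polynomial ring S over K satisfies pd(S/J) ≤ 2n − 4. Then pd(R/I) ≤ 2n − 2. -/

import Mathlib

open MvPolynomial Filter

universe u

/-- `PdLE R n M` means the `R`-module `M` has projective dimension at most `n`: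
either `M` is projective (`n = 0`), or `M` is a quotient of a free module by a
submodule of projective dimension at most `n - 1`. -/
def PdLE (R : Type u) [CommRing R] : ℕ → (M : Type u) → [AddCommGroup M] → [Module R M] → Prop
  | 0, M, _, _ => Module.Projective R M
  | n + 1, M, _, _ => ∃ (F : Type u) (_ : AddCommGroup F) (_ : Module R F),
      Module.Free R F ∧ ∃ f : F →ₗ[R] M, Function.Surjective f ∧ PdLE R n (LinearMap.ker f)

/-- The projective dimension of an `R`-module `M`, as an element of `ℕ∞`
(`⊤` if `M` has no finite free resolution). -/
noncomputable def projDim (R : Type u) [CommRing R] (M : Type u) [AddCommGroup M]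
    [Module R M] : ℕ∞ :=
  sInf ((fun n : ℕ => (n : ℕ∞)) '' {n : ℕ | PdLE R n M})

/-- The height of an ideal: the infimum of the heights of the prime ideals containing it. -/
noncomputable def idealHeight {R : Type*} [CommRing R] (I : Ideal R) : ℕ∞ :=
  ⨅ p ∈ {p : PrimeSpectrum R | I ≤ p.asIdeal}, Order.height p

/-- The length of a module, defined as the Krull dimension of its lattice of submodules. -/
noncomputable def moduleLength (R : Type u) [CommRing R] (M : Type u) [AddCommGroup M]
    [Module R M] : WithBot ℕ∞ :=
  Order.krullDim (Submodule R M)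

/-- `IsHSMultiplicity R mx I e` asserts that the Hilbert–Samuel multiplicity of `R/I`
with respect to the ideal `mx` equals `e`: for `d = dim R/I` there is a polynomial `P`
of degree `d` with `e = d! · (leading coefficient of P)` such that
`length (R/(I + mx^n)) = P(n)` for all large `n`. -/
def IsHSMultiplicity (R : Type u) [CommRing R] (mx I : Ideal R) (e : ℕ) : Prop :=
  ∃ (d : ℕ) (P : Polynomial ℚ),
    ringKrullDim (R ⧸ I) = (d : WithBot ℕ∞) ∧
    P.natDegree = d ∧
    (e : ℚ) = P.leadingCoeff * d.factorial ∧
    ∀ᶠ n : ℕ in Filter.atTop, ∃ k : ℕ, (k : ℚ) = P.eval (n : ℚ) ∧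
      moduleLength R (R ⧸ (I ⊔ mx ^ n)) = ((k : ℕ∞) : WithBot ℕ∞)

/-- A matrix over a `K`-algebra is `1`-generic if it has no generalized zero entry:
for every nonzero vectors `u`, `v` of scalars, `uᵀ M v ≠ 0`. -/
def OneGeneric (K : Type*) [Field K] {R : Type u} [CommRing R] [Algebra K R]
    {m l : ℕ} (M : Matrix (Fin m) (Fin l) R) : Prop :=
  ∀ (u : Fin m → K) (v : Fin l → K), u ≠ 0 → v ≠ 0 →
    ∑ i, ∑ j, algebraMap K R (u i * v j) * M i j ≠ 0

/-- The ideal of all `2 × 2` minors of a `2 × l` matrix. -/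
def minors2 {R : Type u} [CommRing R] {l : ℕ} (M : Matrix (Fin 2) (Fin l) R) : Ideal R :=
  Ideal.span (Set.range fun p : Fin l × Fin l => M 0 p.1 * M 1 p.2 - M 0 p.2 * M 1 p.1)

/-- The homogeneous maximal ideal of a polynomial ring. -/
noncomputable def maxIdeal (K : Type*) [Field K] (σ : Type*) : Ideal (MvPolynomial σ K) :=
  Ideal.span (Set.range (X : σ → MvPolynomial σ K))

/-- The ideal represented by minors by the `2 × (n+1)` matrix with first column `(x, y)ᵀ`
and remaining columns `(u j, v j)ᵀ`: it is generated by the `2 × 2` minors involving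
the first column. -/
def repByMinors {R : Type u} [CommRing R] {n : ℕ} (x y : R) (u v : Fin n → R) : Ideal R :=
  Ideal.span (Set.range fun j : Fin n => x * v j - y * u j)

/-!
Let `J` be the ideal of the minors avoiding the column of `a₁₃` and `s = λx - y`, so that
`I = J + (s a₁₃)`. The generators of `J` and the form `s` are polynomials in the `2n - 2` linear
forms `x`, `y`, `a₁₂`, `a₂₁`, `a₁ⱼ`, `a₂ⱼ` with `j ≥ 4`. If these forms together with `a₁₃` are
linearly dependent, then `I` is extended along a flat map from a polynomial ring in at most
`2n - 2` variables, and Hilbert's syzygy theorem gives the bound. Otherwise `a₁₃` is, up to a change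
of coordinates, a variable that does not occur in `J`, so it is regular modulo `J` and
`(I : a₁₃) = J + (s)`. This yields `0 → R/(J + (s)) → R/I → R/(J + (a₁₃)) → 0`, where the left term
is bounded by Hilbert's theorem and the right one by the hypothesis on `J`, which has height two
because the minors `x a₂₁` and `-y a₁₂` are coprime.
-/

section ProjectiveDimension

open CategoryTheory

theorem PdLE.iff_hasProjectiveDimensionLE {R : Type u} [CommRing R] {n : ℕ} {M : Type u}
    [AddCommGroup M] [Module R M] :
    PdLE R n M ↔ HasProjectiveDimensionLE (ModuleCat.of R M) n := by
  induction n generalizing M with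
  | zero =>
    rw [HasProjectiveDimensionLE, ← projective_iff_hasProjectiveDimensionLT_one,
      ← IsProjective.iff_projective]
    rfl
  | succ n ih =>
    have ker_iff {F : Type u} [AddCommGroup F] [Module R F] [Module.Free R F] {f : F →ₗ[R] M}
        (hf : Function.Surjective f) :
        HasProjectiveDimensionLE (ModuleCat.of R M) (n + 1) ↔ PdLE R n (LinearMap.ker f) := by
      rw [ih]
      exact (LinearMap.shortExact_shortComplexKer hf).hasProjectiveDimensionLT_X₃_iff n
        ((IsProjective.iff_projective F).1 inferInstance)
    constructor
    · rintro ⟨F, _, _, _, f, hf, h⟩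
      exact (ker_iff hf).2 h
    · intro h
      have hf := Finsupp.linearCombination_id_surjective R M
      exact ⟨M →₀ R, _, _, inferInstance, _, hf, (ker_iff hf).1 h⟩

namespace PdLE

variable {R : Type u} [CommRing R] {n k : ℕ} {M M₁ M₂ M₃ : Type u} [AddCommGroup M] [Module R M]
  [AddCommGroup M₁] [Module R M₁] [AddCommGroup M₂] [Module R M₂] [AddCommGroup M₃] [Module R M₃]

theorem mono (hnk : n ≤ k) (h : PdLE R n M) : PdLE R k M := by
  rw [iff_hasProjectiveDimensionLE] at h ⊢
  exact hasProjectiveDimensionLT_of_ge _ (n + 1) _ (Nat.succ_le_succ hnk)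

theorem of_linearEquiv (e : M₁ ≃ₗ[R] M₂) (h : PdLE R n M₁) : PdLE R n M₂ := by
  rw [iff_hasProjectiveDimensionLE] at h ⊢
  exact hasProjectiveDimensionLT_of_iso e.toModuleIso _

theorem of_ringEquiv {S : Type u} [CommRing S] [Module S M] (e : S ≃+* R)
    (he : ∀ (s : S) (m : M), s • m = e s • m) (h : PdLE S n M) : PdLE R n M := by
  have := RingHomInvPair.of_ringEquiv e
  have := RingHomInvPair.of_ringEquiv_symm e
  rw [iff_hasProjectiveDimensionLE] at h ⊢
  let e' : ModuleCat.of S M ≃ₛₗ[RingHomClass.toRingHom e] ModuleCat.of R M :=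
    { AddEquiv.refl M with map_smul' := he }
  exact ModuleCat.hasProjectiveDimensionLE_of_semiLinearEquiv e e' n

theorem of_exact_middle {f : M₁ →ₗ[R] M₂} {g : M₂ →ₗ[R] M₃} (hf : Function.Injective f)
    (hg : Function.Surjective g) (h : Function.Exact f g) (h₁ : PdLE R n M₁) (h₃ : PdLE R n M₃) :
    PdLE R n M₂ := by
  rw [iff_hasProjectiveDimensionLE] at h₁ h₃ ⊢
  exact (ModuleCat.shortComplex_shortExact
    (ModuleCat.shortComplexOfCompEqZero f g h.linearMap_comp_eq_zero) h hf hg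
    ).hasProjectiveDimensionLT_X₂ _ h₁ h₃

theorem of_exact_right {f : M₁ →ₗ[R] M₂} {g : M₂ →ₗ[R] M₃} (hf : Function.Injective f)
    (hg : Function.Surjective g) (h : Function.Exact f g) (h₁ : PdLE R n M₁)
    (h₂ : PdLE R (n + 1) M₂) : PdLE R (n + 1) M₃ := by
  rw [iff_hasProjectiveDimensionLE] at h₁ h₂ ⊢
  exact (ModuleCat.shortComplex_shortExact
    (ModuleCat.shortComplexOfCompEqZero f g h.linearMap_comp_eq_zero) h hf hg
    ).hasProjectiveDimensionLT_X₃ _ h₁ h₂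

open TensorProduct in
theorem baseChange (A : Type u) [CommRing A] [Algebra R A] [Module.Flat R A] (h : PdLE R n M) :
    PdLE A n (A ⊗[R] M) := by
  induction n generalizing M with
  | zero =>
    have : Module.Projective R M := h
    exact inferInstanceAs (Module.Projective A (A ⊗[R] M))
  | succ n ih =>
    obtain ⟨F, _, _, _, f, hf, h⟩ := h
    exact ⟨A ⊗[R] F, _, _, inferInstance, f.baseChange A, LinearMap.lTensor_surjective A hf,
      of_linearEquiv (LinearMap.tensorKerEquiv A A f) (ih h)⟩

theorem quotient_map_of_flat (A : Type u) [CommRing A] [Algebra R A] [Module.Flat R A]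
    {I : Ideal R} (h : PdLE R n (R ⧸ I)) : PdLE A n (A ⧸ I.map (algebraMap R A)) :=
  of_linearEquiv (Algebra.TensorProduct.quotIdealMapEquivTensorQuot A I).toLinearEquiv.symm
    (h.baseChange A)

end PdLE

theorem projDim_le_iff {R : Type u} [CommRing R] {n : ℕ} {M : Type u} [AddCommGroup M]
    [Module R M] : projDim R M ≤ n ↔ PdLE R n M := by
  refine ⟨fun h ↦ ?_, fun h ↦ sInf_le ⟨n, h, rfl⟩⟩
  obtain ⟨_, ⟨k, hk, rfl⟩, hkn⟩ :=
    sInf_lt_iff.1 (h.trans_lt (ENat.natCast_lt_natCast.2 n.lt_succ_self))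
  exact hk.mono (Nat.lt_succ_iff.1 (ENat.natCast_lt_natCast.1 hkn))

end ProjectiveDimension

section CharacteristicSequence

open scoped Polynomial TensorProduct

variable (A : Type u) [CommRing A] (M : Type u) [AddCommGroup M] [Module A M] [Module A[X] M]
  [IsScalarTower A A[X] M]

/-- The injection in the characteristic sequence `0 → A[X] ⊗ M → A[X] ⊗ M → M → 0` of an
`A[X]`-module `M`: multiplication by `X` on the left factor minus multiplication by `X` on the
right factor. -/
noncomputable def charMap : A[X] ⊗[A] M →ₗ[A[X]] A[X] ⊗[A] M :=
  LinearMap.lsmul A[X] (A[X] ⊗[A] M) Polynomial.X -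
    ((LinearMap.lsmul A[X] M Polynomial.X).restrictScalars A).baseChange A[X]

variable {A M}

theorem charMap_tmul (p : A[X]) (m : M) :
    charMap A M (p ⊗ₜ m) = (Polynomial.X * p) ⊗ₜ m - p ⊗ₜ ((Polynomial.X : A[X]) • m) :=
  rfl

theorem tmul_sub_one_tmul_smul_mem_range_charMap (p : A[X]) (m : M) :
    p ⊗ₜ m - 1 ⊗ₜ (p • m) ∈ LinearMap.range (charMap A M) := by
  induction p using Polynomial.induction_on generalizing m with
  | C a =>
    rw [← Polynomial.algebraMap_eq, Algebra.algebraMap_eq_smul_one, smul_assoc, one_smul,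
      TensorProduct.smul_tmul, sub_self]
    exact zero_mem _
  | add p q hp hq =>
    rw [TensorProduct.add_tmul, add_smul, TensorProduct.tmul_add, add_sub_add_comm]
    exact add_mem (hp m) (hq m)
  | monomial k a ih =>
    have hX : charMap A M ((Polynomial.C a * Polynomial.X ^ k) ⊗ₜ m) ∈
      LinearMap.range (charMap A M) := ⟨_, rfl⟩
    rw [charMap_tmul] at hX
    rw [pow_succ, ← mul_assoc, mul_smul, mul_comm _ Polynomial.X]
    simpa only [sub_add_sub_cancel] using add_mem hX (ih ((Polynomial.X : A[X]) • m))

theorem exact_charMap_liftBaseChange :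
    Function.Exact (charMap A M) ((LinearMap.id : M →ₗ[A] M).liftBaseChange A[X]) := by
  refine LinearMap.exact_of_comp_of_mem_range ?_ fun z hz ↦ ?_
  · ext m
    simp [charMap_tmul]
  · have key (z : A[X] ⊗[A] M) :
        z - 1 ⊗ₜ (LinearMap.id : M →ₗ[A] M).liftBaseChange A[X] z ∈
          LinearMap.range (charMap A M) := by
      induction z using TensorProduct.induction_on with
      | zero => simp
      | tmul p m => simpa using tmul_sub_one_tmul_smul_mem_range_charMap p m
      | add z w hz hw =>
        rw [map_add, TensorProduct.tmul_add, add_sub_add_comm]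
        exact add_mem hz hw
    simpa [hz] using key z

theorem coeff_charMap_succ (z : A[X] ⊗[A] M) (k : ℕ) :
    letI e := PolynomialModule.polynomialTensorProductLEquivPolynomialModule A M
    (e (charMap A M z)).coeff (k + 1) =
      (e z).coeff k - (Polynomial.X : A[X]) • (e z).coeff (k + 1) := by
  set e := PolynomialModule.polynomialTensorProductLEquivPolynomialModule A M
  have he (p : A[X]) (m : M) (i : ℕ) : (e (p ⊗ₜ m)).coeff i = p.coeff i • m :=
    (PolynomialModule.smul_single_apply 0 p m i).trans (by simp)
  induction z using TensorProduct.induction_on with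
  | zero => simp
  | tmul p m =>
    have hsub : (e (charMap A M (p ⊗ₜ m))).coeff (k + 1) =
        (e ((Polynomial.X * p) ⊗ₜ m)).coeff (k + 1) -
          (e (p ⊗ₜ ((Polynomial.X : A[X]) • m))).coeff (k + 1) := by
      rw [charMap_tmul, map_sub]
      rfl
    rw [hsub, he, he, he, he, Polynomial.coeff_X_mul, smul_comm]
  | add z w hz hw =>
    simp only [map_add, PolynomialModule.coeff_add, Finsupp.add_apply, hz, hw, smul_add,
      add_sub_add_comm]

theorem charMap_injective : Function.Injective (charMap A M) := by
  refine (injective_iff_map_eq_zero _).2 fun z hz ↦ ?_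
  set e := PolynomialModule.polynomialTensorProductLEquivPolynomialModule A M
  have hstep (k : ℕ) : (e z).coeff k = (Polynomial.X : A[X]) • (e z).coeff (k + 1) := by
    have h := coeff_charMap_succ z k
    rwa [hz, map_zero, PolynomialModule.coeff_zero, Finsupp.zero_apply, eq_comm, sub_eq_zero] at h
  by_contra hne
  have hsupp : (e z).coeff.support.Nonempty := by simpa using hne
  obtain ⟨k, hk, hmax⟩ := Finset.exists_max_image _ id hsupp
  have htop : (e z).coeff (k + 1) = 0 :=
    by_contra fun h ↦ k.not_succ_le_self (hmax _ (Finsupp.mem_support_iff.2 h))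
  rw [Finsupp.mem_support_iff, hstep, htop, smul_zero] at hk
  exact hk rfl

theorem PdLE.polynomial {n : ℕ} (h : PdLE A n M) : PdLE A[X] (n + 1) M :=
  of_exact_right charMap_injective (fun m ↦ ⟨1 ⊗ₜ m, by simp⟩) exact_charMap_liftBaseChange
    (h.baseChange A[X]) ((h.baseChange A[X]).mono n.le_succ)

end CharacteristicSequence

section HilbertSyzygy

open scoped Polynomial

/-- The global dimension of `R` is at most `n`: every `R`-module has projective dimension at
most `n`. -/
def GlobalDimLE (R : Type u) [CommRing R] (n : ℕ) : Prop :=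
  ∀ (M : Type u) [AddCommGroup M] [Module R M], PdLE R n M

namespace GlobalDimLE

theorem of_ringEquiv {R S : Type u} [CommRing R] [CommRing S] {n : ℕ} (h : GlobalDimLE S n)
    (e : S ≃+* R) : GlobalDimLE R n := by
  intro M _ _
  let : Module S M := Module.compHom M (e : S →+* R)
  exact (h M).of_ringEquiv e fun _ _ ↦ rfl

theorem polynomial {A : Type u} [CommRing A] {n : ℕ} (h : GlobalDimLE A n) :
    GlobalDimLE A[X] (n + 1) := by
  intro M _ _
  let : Module A M := Module.compHom M (algebraMap A A[X])
  have : IsScalarTower A A[X] M := .of_algebraMap_smul fun _ _ ↦ rfl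
  exact (h M).polynomial

theorem of_field (K : Type u) [Field K] : GlobalDimLE K 0 :=
  fun M _ _ ↦ inferInstanceAs (Module.Projective K M)

theorem mvPolynomial (K : Type u) [Field K] (ι : Type) [Finite ι] :
    GlobalDimLE (MvPolynomial ι K) (Nat.card ι) := by
  induction ι using Finite.induction_empty_option with
  | of_equiv e ih =>
    rw [← Nat.card_congr e]
    exact ih.of_ringEquiv (renameEquiv K e)
  | h_empty =>
    rw [Nat.card_of_isEmpty]
    exact (of_field K).of_ringEquiv (isEmptyAlgEquiv K PEmpty).symm
  | @h_option ι _ ih =>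
    rw [Finite.card_option]
    exact ih.polynomial.of_ringEquiv (optionEquivLeft K ι).symm

end GlobalDimLE

end HilbertSyzygy

section LinearForms

variable {K : Type u} [Field K] {σ : Type}

/-- The linear change of variables `X k ↦ b k` attached to a basis `b` of the linear forms. -/
noncomputable def linearChangeOfVariables {κ : Type*}
    (b : Module.Basis κ K (homogeneousSubmodule σ K 1)) : MvPolynomial κ K ≃ₐ[K] MvPolynomial σ K :=
  (SymmetricAlgebra.equivMvPolynomial b).symm.trans <| SymmetricAlgebra.equivMvPolynomial <|
    (Module.Basis.span (linearIndependent_X σ K)).map <|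
      LinearEquiv.ofEq _ _ homogeneousSubmodule_one_eq_span_X.symm

theorem linearChangeOfVariables_X {κ : Type*} (b : Module.Basis κ K (homogeneousSubmodule σ K 1))
    (k : κ) : linearChangeOfVariables b (X k) = b k := by
  set c := (Module.Basis.span (linearIndependent_X σ K)).map <|
    LinearEquiv.ofEq _ _ homogeneousSubmodule_one_eq_span_X.symm
  have hcX (j : σ) : (c j : MvPolynomial σ K) = X j := by simp [c, Module.Basis.span_apply]
  have hc : (SymmetricAlgebra.equivMvPolynomial c).toLinearMap ∘ₗ SymmetricAlgebra.ι K _ =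
      (homogeneousSubmodule σ K 1).subtype :=
    c.ext fun j ↦ (SymmetricAlgebra.equivMvPolynomial_ι_apply c j).trans (hcX j).symm
  simpa [linearChangeOfVariables] using LinearMap.congr_fun hc (b k)

theorem basis_sumExtend_inl {ι V : Type*} [AddCommGroup V] [Module K V] {v : ι → V}
    (hv : LinearIndependent K v) (i : ι) : Module.Basis.sumExtend hv (Sum.inl i) = v i := by
  simp only [Module.Basis.sumExtend, Module.Basis.reindex_apply]
  exact Module.Basis.extend_apply_self _ _

theorem exists_algEquiv_of_linearIndependent {ι κ : Type} {l : ι ⊕ κ → MvPolynomial σ K}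
    (hl : LinearIndependent K l) (hl₁ : ∀ i, (l i).IsHomogeneous 1) :
    ∃ (τ : Type u) (e : MvPolynomial (κ ⊕ τ) (MvPolynomial ι K) ≃ₐ[K] MvPolynomial σ K),
      (∀ p, e (C p) = aeval (l ∘ Sum.inl) p) ∧ ∀ k, e (X (Sum.inl k)) = l (Sum.inr k) := by
  let l' (i : ι ⊕ κ) : homogeneousSubmodule σ K 1 := ⟨l i, hl₁ i⟩
  have hl' : LinearIndependent K l' := .of_comp (homogeneousSubmodule σ K 1).subtype hl
  let b := Module.Basis.sumExtend hl'
  let b' := b.reindex ((Equiv.sumAssoc ι κ _).trans (Equiv.sumComm ι _))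
  let e := (sumAlgEquiv K _ ι).symm.trans (linearChangeOfVariables b')
  have he : e.toAlgHom.comp (Algebra.algHom K (MvPolynomial ι K) _) = aeval (l ∘ Sum.inl) := by
    ext i : 1
    simp [e, b', b, l', Algebra.algHom, algebraMap_eq, linearChangeOfVariables_X,
      basis_sumExtend_inl]
  refine ⟨_, e, AlgHom.congr_fun he, fun k ↦ ?_⟩
  simp [e, b', b, l', linearChangeOfVariables_X, basis_sumExtend_inl]

theorem flat_aeval_of_linearIndependent {ι : Type} {l : ι → MvPolynomial σ K}
    (hl : LinearIndependent K l) (hl₁ : ∀ i, (l i).IsHomogeneous 1) :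
    (aeval l : MvPolynomial ι K →ₐ[K] MvPolynomial σ K).toRingHom.Flat := by
  obtain ⟨τ, e, he, -⟩ := exists_algEquiv_of_linearIndependent
    (hl.comp (Equiv.sumEmpty ι Empty) (Equiv.injective _)) fun _ ↦ hl₁ _
  have h : (RingHomClass.toRingHom e).comp C =
      (aeval l : MvPolynomial ι K →ₐ[K] MvPolynomial σ K).toRingHom := RingHom.ext he
  rw [← h]
  have hC : (C : MvPolynomial ι K →+* MvPolynomial (Empty ⊕ τ) (MvPolynomial ι K)).Flat :=
    RingHom.flat_algebraMap_iff.2 inferInstance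
  exact hC.comp (.of_bijective e.bijective)

theorem PdLE.quotient_span_of_subset_range_aeval {ι : Type} [Finite ι] {l : ι → MvPolynomial σ K}
    (hl : LinearIndependent K l) (hl₁ : ∀ i, (l i).IsHomogeneous 1) {s : Set (MvPolynomial σ K)}
    (hs : s ⊆ (aeval l : MvPolynomial ι K →ₐ[K] MvPolynomial σ K).range) :
    PdLE (MvPolynomial σ K) (Nat.card ι) (MvPolynomial σ K ⧸ Ideal.span s) := by
  let _ : Algebra (MvPolynomial ι K) (MvPolynomial σ K) := (aeval l).toRingHom.toAlgebra
  have : Module.Flat (MvPolynomial ι K) (MvPolynomial σ K) := flat_aeval_of_linearIndependent hl hl₁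
  have hmap :
      (Ideal.span (aeval l ⁻¹' s)).map (algebraMap (MvPolynomial ι K) _) = Ideal.span s := by
    rw [Ideal.map_span]
    exact congrArg Ideal.span (Set.image_preimage_eq_of_subset hs)
  rw [← hmap]
  exact .quotient_map_of_flat _ (GlobalDimLE.mvPolynomial K ι _)

theorem PdLE.quotient_span_of_subset_adjoin {ι : Type} [Finite ι] {l : ι → MvPolynomial σ K}
    (hl₁ : ∀ i, (l i).IsHomogeneous 1) {s : Set (MvPolynomial σ K)}
    (hs : s ⊆ Algebra.adjoin K (Set.range l)) :
    PdLE (MvPolynomial σ K) ((Set.range l).finrank K) (MvPolynomial σ K ⧸ Ideal.span s) := by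
  obtain ⟨κ, a, ha, hspan, hla⟩ := exists_linearIndependent' K l
  have := Finite.of_injective a ha
  have hcard : (Set.range l).finrank K = Nat.card κ := by
    rw [Set.finrank, ← hspan, Module.finrank_eq_nat_card_basis (.span hla)]
  rw [← Algebra.adjoin_span, ← hspan, Algebra.adjoin_span,
    Algebra.adjoin_range_eq_range_aeval] at hs
  rw [hcard]
  exact .quotient_span_of_subset_range_aeval hla (fun _ ↦ hl₁ _) hs

theorem isSMulRegular_quotient_span_of_subset_adjoin {ι : Type} {l : ι → MvPolynomial σ K}
    (hl : LinearIndependent K l) (hl₁ : ∀ i, (l i).IsHomogeneous 1) {t : Set ι} {j : ι} (hj : j ∉ t)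
    {s : Set (MvPolynomial σ K)} (hs : s ⊆ Algebra.adjoin K (l '' t)) :
    IsSMulRegular (MvPolynomial σ K ⧸ Ideal.span s) (l j) := by
  have hinj : Function.Injective (Sum.elim (Subtype.val : t → ι) fun _ : Unit ↦ j) :=
    Subtype.val_injective.sumElim (Function.injective_of_subsingleton _)
      fun i _ h ↦ hj (h ▸ i.2)
  obtain ⟨τ, e, heC, heX⟩ := exists_algEquiv_of_linearIndependent (hl.comp _ hinj) fun _ ↦ hl₁ _
  let l' : t → MvPolynomial σ K := l ∘ Subtype.val
  have hmap : ((Ideal.span (aeval l' ⁻¹' s)).map C).map e = Ideal.span s := by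
    rw [← Subtype.range_coe (s := t), ← Set.range_comp, Algebra.adjoin_range_eq_range_aeval] at hs
    rw [Ideal.map_span, Ideal.map_span, ← Set.image_comp, show e ∘ C = aeval l' from funext heC]
    exact congrArg Ideal.span (Set.image_preimage_eq_of_subset hs)
  rw [← hmap, isSMulRegular_quotient_iff_mem_of_smul_mem]
  intro f hf
  obtain ⟨p, rfl⟩ := e.surjective f
  have hp (q) : e q ∈ ((Ideal.span (aeval l' ⁻¹' s)).map C).map e ↔
      q ∈ (Ideal.span (aeval l' ⁻¹' s)).map C := by
    simp [Ideal.mem_map_of_equiv]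
  rw [smul_eq_mul, show l j = _ from (heX ()).symm, ← map_mul, hp, mem_map_C_iff] at hf
  rw [hp, mem_map_C_iff]
  exact fun m ↦ coeff_X_mul m _ p ▸ hf _

theorem isRelPrime_of_isSMulRegular_quotient {R : Type*} [CommRing R] [IsDomain R] {a b : R}
    (ha : a ≠ 0) (h : IsSMulRegular (R ⧸ Ideal.span {a}) b) : IsRelPrime a b := by
  rintro d ⟨a', rfl⟩ ⟨b', rfl⟩
  have ha' : d * a' ∣ a' := by
    rw [isSMulRegular_quotient_iff_mem_of_smul_mem] at h
    refine Ideal.mem_span_singleton.1 (h a' (Ideal.mem_span_singleton.2 ⟨b', ?_⟩))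
    rw [smul_eq_mul, mul_right_comm]
  exact isUnit_of_dvd_one ((mul_dvd_mul_iff_right (right_ne_zero_of_mul ha)).1 (by simpa using ha'))

theorem isRelPrime_of_linearIndependent {ι : Type} {l : ι → MvPolynomial σ K}
    (hl : LinearIndependent K l) (hl₁ : ∀ i, (l i).IsHomogeneous 1) {i j : ι} (hij : i ≠ j) :
    IsRelPrime (l i) (l j) :=
  isRelPrime_of_isSMulRegular_quotient (hl.ne_zero i) <|
    isSMulRegular_quotient_span_of_subset_adjoin hl hl₁ (t := {i}) hij.symm (by simp)

end LinearForms

section ColonSequence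

variable {R : Type u} [CommRing R]

section

variable {M N : Type*} [AddCommGroup M] [Module R M] [AddCommGroup N] [Module R N]
  (φ : M →ₗ[R] N) (B : Submodule R N)

theorem mapQ_comap_injective : Function.Injective ((B.comap φ).mapQ B φ le_rfl) := by
  rw [← LinearMap.ker_eq_bot, Submodule.ker_mapQ, Submodule.mkQ_map_self]

theorem exact_mapQ_comap_factor :
    Function.Exact ((B.comap φ).mapQ B φ le_rfl)
      (Submodule.factor (le_sup_left : B ≤ B ⊔ LinearMap.range φ)) := by
  simp [LinearMap.exact_iff, Submodule.range_mapQ, Submodule.factor, Submodule.ker_mapQ]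

end

namespace PdLE

variable {n : ℕ} {c : R} {J : Ideal R}

theorem quotient_sup_span_singleton (hc : IsSMulRegular (R ⧸ J) c) (h : PdLE R n (R ⧸ J)) :
    PdLE R (n + 1) (R ⧸ J ⊔ Ideal.span {c}) := by
  let φ := LinearMap.toSpanSingleton R R c
  have hcomap : Submodule.comap φ J = J := by
    ext f
    rw [isSMulRegular_quotient_iff_mem_of_smul_mem] at hc
    simpa [φ, mul_comm f] using ⟨hc f, J.mul_mem_left c⟩
  rw [← Ideal.submodule_span_eq, ← LinearMap.range_toSpanSingleton]
  exact of_exact_right (mapQ_comap_injective φ J) (Submodule.factor_surjective _)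
    (exact_mapQ_comap_factor φ J) (hcomap.symm ▸ h) (h.mono n.le_succ)

theorem quotient_sup_span_mul {s : R} (hc : IsSMulRegular (R ⧸ J) c) (h : PdLE R n (R ⧸ J))
    (hs : PdLE R (n + 1) (R ⧸ J ⊔ Ideal.span {s})) :
    PdLE R (n + 1) (R ⧸ J ⊔ Ideal.span {s * c}) := by
  let φ := LinearMap.toSpanSingleton R R c
  have hcomap : Submodule.comap φ (J ⊔ Ideal.span {s * c}) = J ⊔ Ideal.span {s} := by
    rw [isSMulRegular_quotient_iff_mem_of_smul_mem] at hc
    ext f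
    rw [Submodule.mem_comap, LinearMap.toSpanSingleton_apply, sup_comm, sup_comm J,
      Ideal.mem_span_singleton_sup, Ideal.mem_span_singleton_sup]
    constructor
    · rintro ⟨a, b, hb, hab⟩
      have hf : c • (f - a * s) = b := by linear_combination -hab
      exact ⟨a, f - a * s, hc _ (hf ▸ hb), add_sub_cancel _ _⟩
    · rintro ⟨a, b, hb, rfl⟩
      exact ⟨a, b * c, J.mul_mem_right c hb, by simp only [smul_eq_mul]; ring⟩
  have hsup : J ⊔ Ideal.span {s * c} ⊔ LinearMap.range φ = J ⊔ Ideal.span {c} := by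
    rw [LinearMap.range_toSpanSingleton, Ideal.submodule_span_eq, sup_assoc, sup_eq_right.2 <|
      Ideal.span_singleton_le_span_singleton.2 (dvd_mul_left c s)]
  exact of_exact_middle (mapQ_comap_injective φ _) (Submodule.factor_surjective _)
    (exact_mapQ_comap_factor φ _) (hcomap.symm ▸ hs)
    (hsup.symm ▸ quotient_sup_span_singleton hc h)

end PdLE

end ColonSequence

section Height

theorem idealHeight_eq_height {R : Type*} [CommRing R] (I : Ideal R) :
    idealHeight I = I.height := by
  refine le_antisymm ?_ (le_iInf₂ fun p hp ↦ ?_)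
  · rw [I.height_eq_inf_minimalPrimes]
    refine le_iInf₂ fun p hp ↦ ?_
    exact (iInf₂_le (⟨p, hp.isPrime⟩ : PrimeSpectrum R) hp.1.2).trans_eq
      (PrimeSpectrum.height_eq_orderHeight _).symm
  · exact (Ideal.height_mono hp).trans_eq p.height_eq_orderHeight

theorem two_le_height_of_isRelPrime {R : Type*} [CommRing R] [IsDomain R]
    [UniqueFactorizationMonoid R] {I : Ideal R} {a b : R} (ha₀ : a ≠ 0) (ha : a ∈ I) (hb : b ∈ I)
    (hab : IsRelPrime a b) : 2 ≤ I.height := by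
  rw [I.height_eq_inf_minimalPrimes]
  refine le_iInf₂ fun p hp ↦ ?_
  have := hp.isPrime
  by_contra! hlt
  have hp₀ : p ≠ ⊥ := fun h ↦ ha₀ (by simpa [h] using hp.1.2 ha)
  have hp₁ : p.height = 1 := le_antisymm (Order.le_of_lt_add_one (by rwa [one_add_one_eq_two])) <|
    Order.one_le_iff_ne_zero.2 <| Ideal.height_eq_zero_iff_eq_bot.not.2 hp₀
  obtain ⟨q, rfl⟩ := UniqueFactorizationMonoid.isPrincipal_of_height_eq_one hp₁
  have hdvd {f : R} (hf : f ∈ I) : q ∣ f := Ideal.mem_span_singleton.1 (hp.1.2 hf)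
  exact this.ne_top (Ideal.span_singleton_eq_top.2 (hab (hdvd ha) (hdvd hb)))

theorem height_le_two_of_le_span_pair {R : Type*} [CommRing R] [IsNoetherianRing R] {I : Ideal R}
    {x y : R} (hxy : Ideal.span {x, y} ≠ ⊤) (hI : I ≤ Ideal.span {x, y}) : I.height ≤ 2 := by
  refine (Ideal.height_mono hI).trans ((Ideal.height_le_spanFinrank _ hxy).trans ?_)
  exact_mod_cast (Submodule.spanFinrank_span_le_ncard_of_finite (Set.toFinite _)).trans
    ((Set.ncard_insert_le x {y}).trans (by simp))

theorem span_ne_top_of_isHomogeneous {R σ : Type*} [CommRing R] [Nontrivial R] {n : ℕ} (hn : n ≠ 0)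
    {s : Set (MvPolynomial σ R)} (hs : ∀ f ∈ s, f.IsHomogeneous n) : Ideal.span s ≠ ⊤ := by
  have hle : Ideal.span s ≤ RingHom.ker (constantCoeff : MvPolynomial σ R →+* R) :=
    Ideal.span_le.2 fun f hf ↦ (hs f hf).coeff_eq_zero (by simpa using hn.symm)
  exact fun h ↦ RingHom.ker_ne_top _ (top_unique (h ▸ hle))

end Height

section RepByMinors

theorem repByMinors_cons {R : Type u} [CommRing R] {n : ℕ} (x y a b : R) (u v : Fin n → R) :
    repByMinors x y (Fin.cons a u : Fin (n + 1) → R) (Fin.cons b v : Fin (n + 1) → R) =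
      Ideal.span {x * b - y * a} ⊔ repByMinors x y u v := by
  simp only [repByMinors, Fin.range_fin_succ, Ideal.span_insert, Fin.cons_zero, Fin.cons_succ,
    Fin.tail_def]

theorem repByMinors_cons_cons_cons_mul {R : Type u} [CommRing R] {n : ℕ} (x y a b c a' b' t : R)
    (u v : Fin n → R) :
    repByMinors x y (Fin.cons a (Fin.cons b (Fin.cons c u)) : Fin (n + 3) → R)
        (Fin.cons a' (Fin.cons b' (Fin.cons (t * c) v)) : Fin (n + 3) → R) =
      repByMinors x y (Fin.cons a (Fin.cons b u) : Fin (n + 2) → R)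
        (Fin.cons a' (Fin.cons b' v) : Fin (n + 2) → R) ⊔ Ideal.span {(t * x - y) * c} := by
  have hminor : x * (t * c) - y * c = (t * x - y) * c := by ring
  simp only [repByMinors_cons, hminor]
  ac_rfl

theorem repByMinors_le_span_pair {R : Type u} [CommRing R] {n : ℕ} (x y : R) (u v : Fin n → R) :
    repByMinors x y u v ≤ Ideal.span {x, y} := by
  refine Ideal.span_le.2 (Set.range_subset_iff.2 fun j ↦ Ideal.mem_span_pair.2 ⟨v j, -u j, ?_⟩)
  ring

variable {K : Type u} [Field K] {σ : Type}

theorem idealHeight_repByMinors_cons_cons [Finite σ] {x y a b : MvPolynomial σ K}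
    (hl : LinearIndependent K ![x, y, a, b]) (hl₁ : ∀ i, (![x, y, a, b] i).IsHomogeneous 1) {m : ℕ}
    (u v : Fin m → MvPolynomial σ K) :
    idealHeight (repByMinors x y (Fin.cons 0 (Fin.cons a u) : Fin (m + 2) → MvPolynomial σ K)
      (Fin.cons b (Fin.cons 0 v) : Fin (m + 2) → MvPolynomial σ K)) = 2 := by
  rw [idealHeight_eq_height]
  have hrel (i j : Fin 4) (hij : i ≠ j := by decide) :
      IsRelPrime (![x, y, a, b] i) (![x, y, a, b] j) :=
    isRelPrime_of_linearIndependent hl hl₁ hij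
  refine le_antisymm (height_le_two_of_le_span_pair ?_ (repByMinors_le_span_pair ..)) ?_
  · exact span_ne_top_of_isHomogeneous one_ne_zero <| by simpa using ⟨hl₁ 0, hl₁ 1⟩
  · refine two_le_height_of_isRelPrime (a := x * b) (b := -(y * a))
      (mul_ne_zero (hl.ne_zero 0) (hl.ne_zero 3)) ?_ ?_ (IsRelPrime.neg_right ?_)
    · exact Ideal.subset_span ⟨0, by simp⟩
    · exact Ideal.subset_span ⟨1, by simp⟩
    · exact .mul_left (.mul_right (hrel 0 1) (hrel 0 2)) (.mul_right (hrel 3 1) (hrel 3 2))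

end RepByMinors

theorem PdLE.quotient_span_sup_span_mul {K : Type u} [Field K] {σ ι : Type} [Finite ι] {d : ℕ}
    (hd : Nat.card ι ≤ d + 1) {l : ι → MvPolynomial σ K} (hl₁ : ∀ i, (l i).IsHomogeneous 1)
    {s c : MvPolynomial σ K} (hs : s ∈ Algebra.adjoin K (Set.range l)) (hc₁ : c.IsHomogeneous 1)
    {G : Set (MvPolynomial σ K)} (hG : G ⊆ Algebra.adjoin K (Set.range l))
    (h : LinearIndependent K l → PdLE (MvPolynomial σ K) d (MvPolynomial σ K ⧸ Ideal.span G)) :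
    PdLE (MvPolynomial σ K) (d + 1) (MvPolynomial σ K ⧸ Ideal.span G ⊔ Ideal.span {s * c}) := by
  cases nonempty_fintype ι
  let l' (o : Option ι) : MvPolynomial σ K := o.elim c l
  have hl'₁ (o) : (l' o).IsHomogeneous 1 := Option.rec hc₁ hl₁ o
  by_cases hl' : LinearIndependent K l'
  · refine quotient_sup_span_mul ?_ (h (hl'.comp some (Option.some_injective ι))) ?_
    · refine isSMulRegular_quotient_span_of_subset_adjoin hl' hl'₁ (t := Set.range some) (j := none)
        (by simp) ?_
      rwa [← Set.range_comp]
    · rw [← Ideal.span_union]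
      refine (quotient_span_of_subset_adjoin hl₁ ?_).mono ?_
      · exact Set.union_subset hG (by simpa)
      · exact ((finrank_range_le_card l).trans_eq Nat.card_eq_fintype_card.symm).trans hd
  · rw [← Ideal.span_union]
    have hle : Algebra.adjoin K (Set.range l) ≤ Algebra.adjoin K (Set.range l') :=
      Algebra.adjoin_mono (Set.range_subset_iff.2 fun i ↦ ⟨some i, rfl⟩)
    refine (quotient_span_of_subset_adjoin hl'₁ (Set.union_subset (hG.trans hle) ?_)).mono ?_
    · exact Set.singleton_subset_iff.2 (mul_mem (hle hs) (Algebra.subset_adjoin ⟨none, rfl⟩))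
    · have hlt : (Set.range l').finrank K < Fintype.card (Option ι) :=
        (finrank_range_le_card l').lt_of_ne' (linearIndependent_iff_card_eq_finrank_span.not.1 hl')
      rw [Fintype.card_option, ← Nat.card_eq_fintype_card] at hlt
      lia

theorem stmt12_general (K : Type u) [Field K] {σ : Type} [Finite σ] {m d : ℕ} (hd : 2 * m + 3 ≤ d)
    {x y a₁₂ a₁₃ a₂₁ : MvPolynomial σ K} (lam : K) (hx : x.IsHomogeneous 1)
    (hy : y.IsHomogeneous 1) (ha₁₂ : a₁₂.IsHomogeneous 1) (ha₁₃ : a₁₃.IsHomogeneous 1)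
    (ha₂₁ : a₂₁.IsHomogeneous 1) {u v : Fin m → MvPolynomial σ K}
    (hu : ∀ j, (u j).IsHomogeneous 1) (hv : ∀ j, (v j).IsHomogeneous 1)
    (ih : ∀ g : Fin (m + 2) → MvPolynomial σ K, (∀ i, (g i).IsHomogeneous 2) →
      idealHeight (Ideal.span (Set.range g)) = 2 →
      projDim (MvPolynomial σ K) (MvPolynomial σ K ⧸ Ideal.span (Set.range g)) ≤ d) :
    projDim (MvPolynomial σ K) (MvPolynomial σ K ⧸ repByMinors x y
      (Fin.cons 0 (Fin.cons a₁₂ (Fin.cons a₁₃ u)) : Fin (m + 3) → MvPolynomial σ K)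
      (Fin.cons a₂₁ (Fin.cons 0 (Fin.cons (algebraMap K (MvPolynomial σ K) lam * a₁₃) v)))) ≤
        (d + 1 : ℕ) := by
  let l : Fin 4 ⊕ Fin m ⊕ Fin m → MvPolynomial σ K := Sum.elim ![x, y, a₁₂, a₂₁] (Sum.elim u v)
  have hcard : Nat.card (Fin 4 ⊕ Fin m ⊕ Fin m) ≤ d + 1 := by simp; lia
  have hl₁ : ∀ i, (l i).IsHomogeneous 1 := by simp [l, Fin.forall_fin_succ, *]
  have hl (i) : l i ∈ Algebra.adjoin K (Set.range l) := Algebra.subset_adjoin ⟨i, rfl⟩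
  have hs : algebraMap K _ lam * x - y ∈ Algebra.adjoin K (Set.range l) :=
    sub_mem (mul_mem (algebraMap_mem _ _) (hl (.inl 0))) (hl (.inl 1))
  let u' : Fin (m + 2) → MvPolynomial σ K := Fin.cons 0 (Fin.cons a₁₂ u)
  let v' : Fin (m + 2) → MvPolynomial σ K := Fin.cons a₂₁ (Fin.cons 0 v)
  have hu'₁ : ∀ j, (u' j).IsHomogeneous 1 := Fin.cases (isHomogeneous_zero ..) (Fin.cases ha₁₂ hu)
  have hv'₁ : ∀ j, (v' j).IsHomogeneous 1 := Fin.cases ha₂₁ (Fin.cases (isHomogeneous_zero ..) hv)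
  have hu' : ∀ j, u' j ∈ Algebra.adjoin K (Set.range l) :=
    Fin.cases (zero_mem _) (Fin.cases (hl (.inl 2)) fun j ↦ hl (.inr (.inl j)))
  have hv' : ∀ j, v' j ∈ Algebra.adjoin K (Set.range l) :=
    Fin.cases (hl (.inl 3)) (Fin.cases (zero_mem _) fun j ↦ hl (.inr (.inr j)))
  have hG : (Set.range fun j ↦ x * v' j - y * u' j) ⊆ Algebra.adjoin K (Set.range l) :=
    Set.range_subset_iff.2 fun j ↦
      sub_mem (mul_mem (hl (.inl 0)) (hv' j)) (mul_mem (hl (.inl 1)) (hu' j))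
  rw [repByMinors_cons_cons_cons_mul, projDim_le_iff]
  refine PdLE.quotient_span_sup_span_mul hcard hl₁ hs ha₁₃ hG fun hli ↦ ?_
  have hxyab : LinearIndependent K ![x, y, a₁₂, a₂₁] := hli.comp Sum.inl Sum.inl_injective
  have hht : idealHeight (repByMinors x y u' v') = 2 :=
    idealHeight_repByMinors_cons_cons hxyab (by simp [Fin.forall_fin_succ, *]) u v
  exact projDim_le_iff.1 (ih _ (fun j ↦ (hx.mul (hv'₁ j)).sub (hy.mul (hu'₁ j))) hht)

/-- with `n = m + 3 ≥ 3`, if `I` is generated by `n` quadrics represented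
by minors by `M = [[x, 0, a₁₂, a₁₃, a₁₄, …, a₁ₙ], [y, a₂₁, 0, λa₁₃, a₂₄, …, a₂ₙ]]` with
`λ ∈ K` a scalar, and if every height two ideal generated by `n - 1` quadrics in any
polynomial ring over `K` has projective dimension at most `2n - 4`, then
`pd(R/I) ≤ 2n - 2`. -/
theorem stmt12 (K : Type u) [Field K] [IsAlgClosed K] (N m : ℕ)
    (x y a₁₂ a₁₃ a₂₁ : MvPolynomial (Fin N) K) (lam : K)
    (hx : x.IsHomogeneous 1) (hy : y.IsHomogeneous 1)
    (ha₁₂ : a₁₂.IsHomogeneous 1) (ha₁₃ : a₁₃.IsHomogeneous 1)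
    (ha₂₁ : a₂₁.IsHomogeneous 1)
    (hxy : LinearIndependent K ![x, y])
    (u v : Fin m → MvPolynomial (Fin N) K)
    (hu : ∀ j, (u j).IsHomogeneous 1) (hv : ∀ j, (v j).IsHomogeneous 1)
    (I : Ideal (MvPolynomial (Fin N) K))
    (hI : I = repByMinors x y
      (Fin.cons 0 (Fin.cons a₁₂ (Fin.cons a₁₃ u)))
      (Fin.cons a₂₁ (Fin.cons 0 (Fin.cons (algebraMap K (MvPolynomial (Fin N) K) lam * a₁₃) v))))
    (ih : ∀ (N' : ℕ) (J : Ideal (MvPolynomial (Fin N') K))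
        (g : Fin (m + 2) → MvPolynomial (Fin N') K),
      (∀ i, (g i).IsHomogeneous 2) → J = Ideal.span (Set.range g) →
      idealHeight J = 2 →
      projDim (MvPolynomial (Fin N') K) (MvPolynomial (Fin N') K ⧸ J) ≤
        ((2 * (m + 3) - 4 : ℕ) : ℕ∞)) :
    projDim (MvPolynomial (Fin N) K) (MvPolynomial (Fin N) K ⧸ I) ≤ ((2 * (m + 3) - 2 : ℕ) : ℕ∞) := by
  subst hI
  exact stmt12_general K (d := 2 * m + 3) le_rfl lam hx hy ha₁₂ ha₁₃ ha₂₁ hu hv fun g hg hht ↦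
    (ih N _ g hg rfl hht).trans (by exact_mod_cast (by lia : 2 * (m + 3) - 4 ≤ 2 * m + 3))
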